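/- arXiv:1403.5945 — 2 statements merged into one kernel-verified Lean document; each statement's English description precedes it below -/
import Mathlib

section
/- There is no set A = {0 = a₀ < a₁ < ⋯ < a₁₀} of 11 nonnegative integers with a₁₀ = 23 and A+A ⊇ [0,46]; equivalently, n₂*(10) < 46 while a nonrestricted basis of length 10 and range 46 exists. -/
open Pointwise

/-!
Cut a restricted basis `A ⊆ [0, 23]` at its midpoint. A sum at most `11` only involves elements at
most `11`, so `L = A ∩ [0, 11]` satisfies `[0, 11] ⊆ L + L`. The reflection `x ↦ 23 - x` maps
restricted bases to restricted bases, so the reflected upper half `U` has the same property. Four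
elements have at most ten sums, fewer than the twelve required, so if `A` has `11` elements, then
one half, which by reflection may be taken to be `L`, has five elements and the other six. The only
five-element candidate is `L = {0, 1, 3, 5, 6}`, and no six-element candidate for `U` then yields
all sums from `12` to `34`.
-/

open Finset

/-- The mirror image of `A` in `[0, m]`. It is meaningful for `A ⊆ [0, m]`; the truncated
subtraction sends all larger elements to `0`. -/
def reflect (m : ℕ) (A : Finset ℕ) : Finset ℕ := A.image (m - ·)

/-- `A` is a restricted additive 2-basis with range `2 * m`. Only `A ⊆ [0, m]` is required of the
largest element, since `2 * m ∈ A + A` then forces it to be `m`. -/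
structure IsRestrictedBasis (A : Finset ℕ) (m : ℕ) : Prop where
  subset_Icc : A ⊆ Icc 0 m
  Icc_subset_add_self : Icc 0 (2 * m) ⊆ A + A

theorem Icc_subset_filter_add_filter {A : Finset ℕ} {k : ℕ} (h : Icc 0 k ⊆ A + A) :
    Icc 0 k ⊆ {x ∈ A | x ≤ k} + {x ∈ A | x ≤ k} := by
  intro t ht
  obtain ⟨x, hx, y, hy, rfl⟩ := mem_add.1 (h ht)
  have hxy : x + y ≤ k := (mem_Icc.1 ht).2
  exact add_mem_add (mem_filter.2 ⟨hx, by omega⟩) (mem_filter.2 ⟨hy, by omega⟩)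

theorem card_add_self_le_choose {α : Type*} [AddCommMonoid α] [DecidableEq α] (A : Finset α) :
    #(A + A) ≤ (#A + 1).choose 2 := by
  have hsub : A + A ⊆ A.sym2.image Sym2.add := by
    rintro _ h
    obtain ⟨x, hx, y, hy, rfl⟩ := mem_add.1 h
    exact mem_image.2 ⟨s(x, y), mk_mem_sym2_iff.2 ⟨hx, hy⟩, rfl⟩
  calc #(A + A) ≤ #(A.sym2.image Sym2.add) := card_le_card hsub
    _ ≤ #A.sym2 := card_image_le
    _ = (#A + 1).choose 2 := card_sym2 A

theorem add_one_le_choose_of_Icc_subset_add_self {A : Finset ℕ} {k : ℕ} (h : Icc 0 k ⊆ A + A) :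
    k + 1 ≤ (#A + 1).choose 2 := calc
  k + 1 = #(Icc 0 k) := (Nat.card_Icc 0 k).symm
  _ ≤ #(A + A) := card_le_card h
  _ ≤ (#A + 1).choose 2 := card_add_self_le_choose A

theorem five_le_card_of_Icc_subset_add_self {A : Finset ℕ} (h : Icc 0 11 ⊆ A + A) : 5 ≤ #A := by
  by_contra! hlt
  have hsums : 12 ≤ Nat.choose 5 2 :=
    (add_one_le_choose_of_Icc_subset_add_self h).trans (Nat.choose_le_choose 2 hlt)
  exact absurd hsums (by decide)

theorem pair_subset_of_Icc_subset_add_self {A : Finset ℕ} {k : ℕ} (hk : 1 ≤ k)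
    (h : Icc 0 k ⊆ A + A) : {0, 1} ⊆ A := by
  obtain ⟨x, hx, y, hy, hxy⟩ : ∃ x ∈ A, ∃ y ∈ A, x + y = 1 := mem_add.1 (h (by simp [hk]))
  obtain ⟨rfl, rfl⟩ | ⟨rfl, rfl⟩ := Nat.add_eq_one_iff.1 hxy
  · exact insert_subset hx (singleton_subset_iff.2 hy)
  · exact insert_subset hy (singleton_subset_iff.2 hx)

theorem exists_eq_pair_union {A : Finset ℕ} {k c : ℕ} (hk : 1 ≤ k) (hA : A ⊆ Icc 0 k)
    (hc : #A = c + 2) (h : Icc 0 k ⊆ A + A) : ∃ W ∈ powersetCard c (Icc 2 k), A = {0, 1} ∪ W := by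
  have hpair : {0, 1} ⊆ A := pair_subset_of_Icc_subset_add_self hk h
  refine ⟨A \ {0, 1}, mem_powersetCard.2 ⟨fun x hx ↦ ?_, ?_⟩, (union_sdiff_of_subset hpair).symm⟩
  · have hxk := hA (mem_sdiff.1 hx).1
    simp only [mem_sdiff, mem_insert, mem_singleton, mem_Icc] at hx hxk ⊢
    omega
  · rw [card_sdiff_of_subset hpair, hc, card_pair zero_ne_one, Nat.add_sub_cancel]

section Reflection

variable {A : Finset ℕ} {m : ℕ}

theorem reflect_subset_Icc : reflect m A ⊆ Icc 0 m :=
  image_subset_iff.2 fun x _ ↦ mem_Icc.2 ⟨Nat.zero_le _, m.sub_le x⟩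

theorem reflect_reflect (hA : A ⊆ Icc 0 m) : reflect m (reflect m A) = A := by
  rw [reflect, reflect, image_image]
  calc A.image ((m - ·) ∘ (m - ·)) = A.image id :=
        image_congr fun x hx ↦ Nat.sub_sub_self (mem_Icc.1 (hA hx)).2
    _ = A := image_id

theorem card_reflect (hA : A ⊆ Icc 0 m) : #(reflect m A) = #A :=
  card_image_le.antisymm <| calc
    #A = #(reflect m (reflect m A)) := by rw [reflect_reflect hA]
    _ ≤ #(reflect m A) := card_image_le

theorem filter_reflect_le {j k : ℕ} (hA : A ⊆ Icc 0 m) (hm : j + k + 1 = m) :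
    {x ∈ reflect m A | x ≤ j} = reflect m {x ∈ A | ¬x ≤ k} := by
  rw [reflect, reflect, filter_image]
  congr 1
  exact filter_congr fun x hx ↦ by have := mem_Icc.1 (hA hx); omega

theorem filter_le_union_reflect {j k : ℕ} (hA : A ⊆ Icc 0 m) (hm : j + k + 1 = m) :
    {x ∈ A | x ≤ k} ∪ reflect m {x ∈ reflect m A | x ≤ j} = A := by
  rw [filter_reflect_le hA hm, reflect_reflect ((filter_subset _ _).trans hA),
    filter_union_filter_not_eq]

theorem card_filter_le_add_card_filter_reflect_le {j k : ℕ} (hA : A ⊆ Icc 0 m)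
    (hm : j + k + 1 = m) : #{x ∈ A | x ≤ k} + #{x ∈ reflect m A | x ≤ j} = #A := by
  rw [filter_reflect_le hA hm, card_reflect ((filter_subset _ _).trans hA),
    card_filter_add_card_filter_not]

end Reflection

namespace IsRestrictedBasis

variable {A : Finset ℕ} {m k : ℕ}

protected theorem reflect (h : IsRestrictedBasis A m) : IsRestrictedBasis (reflect m A) m where
  subset_Icc := reflect_subset_Icc
  Icc_subset_add_self t ht := by
    have ht' : t ≤ 2 * m := (mem_Icc.1 ht).2
    obtain ⟨x, hx, y, hy, hxy⟩ : ∃ x ∈ A, ∃ y ∈ A, x + y = 2 * m - t :=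
      mem_add.1 (h.Icc_subset_add_self (mem_Icc.2 ⟨Nat.zero_le _, Nat.sub_le _ _⟩))
    have hxm : x ≤ m := (mem_Icc.1 (h.subset_Icc hx)).2
    have hym : y ≤ m := (mem_Icc.1 (h.subset_Icc hy)).2
    have hsum : m - x + (m - y) = t := by omega
    exact hsum ▸ add_mem_add (mem_image_of_mem _ hx) (mem_image_of_mem _ hy)

protected theorem Icc_subset_filter_add_filter (h : IsRestrictedBasis A m) (hk : k ≤ 2 * m) :
    Icc 0 k ⊆ {x ∈ A | x ≤ k} + {x ∈ A | x ≤ k} :=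
  Icc_subset_filter_add_filter <| (Icc_subset_Icc_right hk).trans h.Icc_subset_add_self

end IsRestrictedBasis

theorem eq_of_card_eq_five {P : Finset ℕ} (hP : P ⊆ Icc 0 11) (hcard : #P = 5)
    (h : Icc 0 11 ⊆ P + P) : P = {0, 1, 3, 5, 6} := by
  have key : ∀ W ∈ powersetCard 3 (Icc 2 11),
      Icc 0 11 ⊆ ({0, 1} ∪ W) + ({0, 1} ∪ W) → {0, 1} ∪ W = {0, 1, 3, 5, 6} := by
    decide +kernel
  obtain ⟨W, hW, rfl⟩ := exists_eq_pair_union (by decide) hP hcard h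
  exact key W hW h

theorem not_Icc_subset_add_self_union_reflect {U : Finset ℕ} (hU : U ⊆ Icc 0 11) (hcard : #U = 6)
    (h : Icc 0 11 ⊆ U + U) :
    ¬Icc 12 34 ⊆ ({0, 1, 3, 5, 6} ∪ reflect 23 U) + ({0, 1, 3, 5, 6} ∪ reflect 23 U) := by
  have key : ∀ W ∈ powersetCard 4 (Icc 2 11), Icc 0 11 ⊆ ({0, 1} ∪ W) + ({0, 1} ∪ W) →
      ¬Icc 12 34 ⊆ ({0, 1, 3, 5, 6} ∪ reflect 23 ({0, 1} ∪ W)) +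
        ({0, 1, 3, 5, 6} ∪ reflect 23 ({0, 1} ∪ W)) := by
    decide +kernel
  obtain ⟨W, hW, rfl⟩ := exists_eq_pair_union (by decide) hU hcard h
  exact key W hW h

namespace IsRestrictedBasis

variable {A : Finset ℕ}

theorem card_filter_le_ne_five (h : IsRestrictedBasis A 23) (hA : #A = 11) :
    #{x ∈ A | x ≤ 11} ≠ 5 := by
  intro hL
  have hsub (B : Finset ℕ) : {x ∈ B | x ≤ 11} ⊆ Icc 0 11 := fun x hx ↦
    mem_Icc.2 ⟨Nat.zero_le x, (mem_filter.1 hx).2⟩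
  have hU : #{x ∈ reflect 23 A | x ≤ 11} = 6 := by
    have hLU : #{x ∈ A | x ≤ 11} + #{x ∈ reflect 23 A | x ≤ 11} = 11 :=
      (card_filter_le_add_card_filter_reflect_le h.subset_Icc rfl).trans hA
    omega
  have hLeq : {x ∈ A | x ≤ 11} = {0, 1, 3, 5, 6} :=
    eq_of_card_eq_five (hsub A) hL (h.Icc_subset_filter_add_filter (by decide))
  apply not_Icc_subset_add_self_union_reflect (hsub (reflect 23 A)) hU
    (h.reflect.Icc_subset_filter_add_filter (by decide))
  rw [← hLeq, filter_le_union_reflect h.subset_Icc rfl]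
  exact (Icc_subset_Icc (by decide) (by decide)).trans h.Icc_subset_add_self

theorem card_ne_eleven (h : IsRestrictedBasis A 23) : #A ≠ 11 := by
  intro hA
  have hL : 5 ≤ #{x ∈ A | x ≤ 11} :=
    five_le_card_of_Icc_subset_add_self (h.Icc_subset_filter_add_filter (by decide))
  have hU : 5 ≤ #{x ∈ reflect 23 A | x ≤ 11} :=
    five_le_card_of_Icc_subset_add_self (h.reflect.Icc_subset_filter_add_filter (by decide))
  have hLU : #{x ∈ A | x ≤ 11} + #{x ∈ reflect 23 A | x ≤ 11} = 11 :=
    (card_filter_le_add_card_filter_reflect_le h.subset_Icc rfl).trans hA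
  have hL' := h.card_filter_le_ne_five hA
  have hU' := h.reflect.card_filter_le_ne_five ((card_reflect h.subset_Icc).trans hA)
  omega

theorem twelve_le_card (h : IsRestrictedBasis A 23) : 12 ≤ #A := by
  by_contra! hlt
  obtain ⟨B, hAB, hB, hcard⟩ :=
    exists_subsuperset_card_eq h.subset_Icc (Nat.le_of_lt_succ hlt) (by simp : 11 ≤ #(Icc 0 23))
  exact card_ne_eleven ⟨hB, h.Icc_subset_add_self.trans (add_subset_add hAB hAB)⟩ hcard

end IsRestrictedBasis

theorem no_restricted_basis_length10_range46 :
    (¬ ∃ a : ℕ → ℕ, a 0 = 0 ∧ (∀ m < 10, a m < a (m + 1)) ∧ a 10 = 23 ∧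
      Finset.Icc 0 46 ⊆
        ((Finset.range 11).image a) + ((Finset.range 11).image a)) ∧
    (∃ a : ℕ → ℕ, a 0 = 0 ∧ (∀ m < 10, a m < a (m + 1)) ∧ a 10 ≠ 23 ∧
      Finset.Icc 0 46 ⊆
        ((Finset.range 11).image a) + ((Finset.range 11).image a)) := by
  constructor
  · rintro ⟨a, -, hlt, h10, hcover⟩
    have hmono : MonotoneOn a (Set.Iic 10) :=
      monotoneOn_of_le_add_one Set.ordConnected_Iic fun m _ _ hm ↦ (hlt m hm).le
    have hsub : (range 11).image a ⊆ Icc 0 23 := image_subset_iff.2 fun m hm ↦ by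
      have hm10 : m ≤ 10 := Nat.le_of_lt_succ (mem_range.1 hm)
      exact mem_Icc.2 ⟨Nat.zero_le _, h10 ▸ hmono hm10 Set.self_mem_Iic hm10⟩
    have hcard : #((range 11).image a) ≤ 11 := card_image_le.trans_eq (card_range 11)
    exact hcard.not_gt (IsRestrictedBasis.twelve_le_card ⟨hsub, hcover⟩)
  · exact ⟨fun n ↦ [0, 1, 2, 3, 7, 11, 15, 19, 21, 22, 24].getD n 0, by decide +kernel⟩
end

section
/- n₂*(10) = 44: there exists a set A = {0 = a₀ < ⋯ < a₁₀} with a₁₀ = 22 and A+A ⊇ [0,44], and no set {0 = a₀ < ⋯ < a₁₀} with a₁₀ = 23 satisfies A+A ⊇ [0,46]. -/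
open Pointwise

/-!
Let `A` have at most eleven elements, maximum `m ≥ 23`, and `A + A ⊇ [0, 2m]`. The sums up to `k`
only involve the elements of `A` up to `k`, and `m - A` is again such a set, so both ends of `A`
are themselves bases of short intervals. Four elements never reach `9`, so `A ∩ [0, 11]` and
`A ∩ [m - 11, m]` both have at least five elements, and, after a reflection, the first has exactly
five. The only such set is `{0, 1, 3, 5, 6}`, which reaches `12` and no further, so `A` needs two
more elements in `[12, 15]`. For `m ≥ 25` the five elements of `A ∩ [m - 9, m]` make a total of
twelve. For `m ≤ 24` the at most four elements of `A ∩ [16, m]` reflect to a basis of `[0, m - 16]`,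
which leaves few enough sets to be checked one by one.
-/

open Finset

/-- `A` is an additive basis of order two for the interval `[0, n]`. It is spelled out elementwise,
rather than as `Icc 0 n ⊆ A + A`, so that deciding it stops at the first missing sum. -/
def IsTwoBasis (n : ℕ) (A : Finset ℕ) : Prop :=
  ∀ t ≤ n, ∃ x ∈ A, ∃ y ∈ A, x + y = t

theorem isTwoBasis_iff_Icc_subset {n : ℕ} {A : Finset ℕ} :
    IsTwoBasis n A ↔ Icc 0 n ⊆ A + A := by
  simp [IsTwoBasis, subset_iff, mem_add]

theorem inter_Iic_eq_union_inter_Ioc {i j : ℕ} (hij : i ≤ j) (A : Finset ℕ) :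
    A ∩ Iic j = A ∩ Iic i ∪ A ∩ Ioc i j := by
  ext x
  simp only [mem_union, mem_inter, mem_Iic, mem_Ioc]
  grind

theorem card_inter_Iic_add_card_reflect_inter_Iic_le {i j m : ℕ} (hij : i + j < m)
    (A : Finset ℕ) : #(A ∩ Iic i) + #(reflect m A ∩ Iic j) ≤ #A := by
  have hsub : reflect m A ∩ Iic j ⊆ (A \ Iic i).image (m - ·) := by
    intro y hy
    simp only [reflect, mem_inter, mem_image, mem_Iic] at hy
    obtain ⟨⟨x, hx, rfl⟩, hxj⟩ := hy
    refine mem_image_of_mem _ (mem_sdiff.2 ⟨hx, ?_⟩)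
    rw [mem_Iic]
    omega
  calc #(A ∩ Iic i) + #(reflect m A ∩ Iic j)
      ≤ #(A ∩ Iic i) + #(A \ Iic i) :=
        Nat.add_le_add_left ((card_le_card hsub).trans card_image_le) _
    _ = #A := card_inter_add_card_sdiff A (Iic i)

theorem inter_Iic_union_reflect_reflect_inter_Iic {i j m : ℕ} {A : Finset ℕ} (hA : A ⊆ Iic m)
    (hij : m ≤ i + j + 1) : A ∩ Iic i ∪ reflect m (reflect m A ∩ Iic j) = A := by
  have hinvol : ∀ x ∈ A, m - (m - x) = x := fun x hx ↦ Nat.sub_sub_self (mem_Iic.1 (hA hx))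
  refine Subset.antisymm (union_subset inter_subset_left fun z hz ↦ ?_) fun x hx ↦ ?_
  · simp only [reflect, mem_inter, mem_image] at hz
    obtain ⟨_, ⟨⟨x, hx, rfl⟩, -⟩, rfl⟩ := hz
    rwa [hinvol x hx]
  · rw [mem_union, mem_inter, mem_Iic]
    refine (le_or_gt x i).imp (⟨hx, ·⟩) fun hix ↦ mem_image.2 ⟨m - x, ?_, hinvol x hx⟩
    exact mem_inter.2 ⟨mem_image_of_mem _ hx, mem_Iic.2 (by omega)⟩

namespace IsTwoBasis

instance (n : ℕ) (A : Finset ℕ) : Decidable (IsTwoBasis n A) :=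
  inferInstanceAs (Decidable (∀ t ≤ n, ∃ x ∈ A, ∃ y ∈ A, x + y = t))

variable {k m n : ℕ} {A : Finset ℕ}

theorem mono (h : IsTwoBasis n A) (hkn : k ≤ n) : IsTwoBasis k A :=
  fun t ht ↦ h t (ht.trans hkn)

theorem inter_Iic (h : IsTwoBasis n A) : IsTwoBasis n (A ∩ Iic n) := by
  intro t ht
  obtain ⟨x, hx, y, hy, rfl⟩ := h t ht
  exact ⟨x, mem_inter.2 ⟨hx, mem_Iic.2 (by omega)⟩, y, mem_inter.2 ⟨hy, mem_Iic.2 (by omega)⟩, rfl⟩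

protected theorem reflect (h : IsTwoBasis (2 * m) A) (hA : A ⊆ Iic m) :
    IsTwoBasis (2 * m) (reflect m A) := by
  intro t ht
  obtain ⟨x, hx, y, hy, hxy⟩ := h (2 * m - t) (Nat.sub_le _ _)
  have hxm := mem_Iic.1 (hA hx)
  have hym := mem_Iic.1 (hA hy)
  exact ⟨m - x, mem_image_of_mem _ hx, m - y, mem_image_of_mem _ hy, by omega⟩

theorem five_le_card (h : IsTwoBasis 9 A) : 5 ≤ #A := by
  have check : ∀ B ∈ (Iic 9).powerset, #B < 5 → ¬ IsTwoBasis 9 B := by decide +kernel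
  have hB : 5 ≤ #(A ∩ Iic 9) := by
    by_contra! hlt
    exact check _ (mem_powerset.2 inter_subset_right) hlt h.inter_Iic
  exact hB.trans (card_le_card inter_subset_left)

theorem inter_Iic_eleven_eq (h : IsTwoBasis 11 A) (hcard : #(A ∩ Iic 11) ≤ 5) :
    A ∩ Iic 11 = {0, 1, 3, 5, 6} := by
  have check : ∀ B ∈ (Iic 11).powersetCard 5, IsTwoBasis 11 B → B = {0, 1, 3, 5, 6} := by
    decide +kernel
  have hfive : 5 ≤ #(A ∩ Iic 11) := (h.inter_Iic.mono (by omega)).five_le_card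
  exact check _ (mem_powersetCard.2 ⟨inter_subset_right, hcard.antisymm hfive⟩) h.inter_Iic

theorem seven_le_card_inter_Iic_fifteen (h : IsTwoBasis 15 A)
    (hlow : A ∩ Iic 11 = {0, 1, 3, 5, 6}) : 7 ≤ #(A ∩ Iic 15) := by
  have check : ∀ M ∈ (Ioc 11 15).powerset, IsTwoBasis 15 ({0, 1, 3, 5, 6} ∪ M) →
      7 ≤ #({0, 1, 3, 5, 6} ∪ M) := by decide +kernel
  have hsplit : A ∩ Iic 15 = {0, 1, 3, 5, 6} ∪ A ∩ Ioc 11 15 :=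
    hlow ▸ inter_Iic_eq_union_inter_Ioc (by omega) A
  rw [hsplit]
  exact check _ (mem_powerset.2 inter_subset_right) (hsplit ▸ h.inter_Iic)

theorem twelve_le_card_of_mem_Icc (h : IsTwoBasis (2 * m) A) (hA : A ⊆ Iic m)
    (hm : m ∈ Icc 23 24) (hlow : A ∩ Iic 11 = {0, 1, 3, 5, 6}) : 12 ≤ #A := by
  have check : ∀ m ∈ Icc 23 24, ∀ V ∈ (Iic (m - 16)).powerset, #V ≤ 4 → IsTwoBasis (m - 16) V →
      ∀ M ∈ (Ioc 11 15).powerset, #({0, 1, 3, 5, 6} ∪ M) + #V ≤ 11 →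
        ¬ IsTwoBasis (2 * m) ({0, 1, 3, 5, 6} ∪ M ∪ reflect m V) := by
    decide +kernel
  have hm' := mem_Icc.1 hm
  by_contra! hlt
  have hbottom : 7 ≤ #(A ∩ Iic 15) :=
    (h.mono (by omega)).seven_le_card_inter_Iic_fifteen hlow
  have htop : IsTwoBasis (m - 16) (reflect m A ∩ Iic (m - 16)) :=
    ((h.reflect hA).mono (by omega)).inter_Iic
  have hends : #(A ∩ Iic 15) + #(reflect m A ∩ Iic (m - 16)) ≤ #A :=
    card_inter_Iic_add_card_reflect_inter_Iic_le (by omega) A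
  have hsplit : A ∩ Iic 15 ∪ reflect m (reflect m A ∩ Iic (m - 16)) = A :=
    inter_Iic_union_reflect_reflect_inter_Iic hA (by omega)
  have hfifteen : A ∩ Iic 15 = {0, 1, 3, 5, 6} ∪ A ∩ Ioc 11 15 :=
    hlow ▸ inter_Iic_eq_union_inter_Ioc (by omega) A
  have htop_card : #(reflect m A ∩ Iic (m - 16)) ≤ 4 := by omega
  rw [hfifteen] at hends hsplit
  exact check m hm _ (mem_powerset.2 inter_subset_right) htop_card htop (A ∩ Ioc 11 15)
    (mem_powerset.2 inter_subset_right) (by omega) (by rwa [hsplit])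

theorem twelve_le_card_of_card_inter_Iic_le (h : IsTwoBasis (2 * m) A) (hA : A ⊆ Iic m)
    (hm : 23 ≤ m) (hcard : #(A ∩ Iic 11) ≤ 5) : 12 ≤ #A := by
  have hlow := (h.mono (by omega)).inter_Iic_eleven_eq hcard
  obtain hm25 | hm25 := Nat.lt_or_ge m 25
  · exact h.twelve_le_card_of_mem_Icc hA (mem_Icc.2 ⟨hm, by omega⟩) hlow
  · have hbottom : 7 ≤ #(A ∩ Iic 15) :=
      (h.mono (by omega)).seven_le_card_inter_Iic_fifteen hlow
    have htop : 5 ≤ #(reflect m A ∩ Iic 9) :=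
      ((h.reflect hA).mono (by omega)).inter_Iic.five_le_card
    exact (add_le_add hbottom htop).trans
      (card_inter_Iic_add_card_reflect_inter_Iic_le (by omega) A)

theorem twelve_le_card (h : IsTwoBasis (2 * m) A) (hA : A ⊆ Iic m) (hm : 23 ≤ m) :
    12 ≤ #A := by
  by_contra! hlt
  have hends : #(A ∩ Iic 11) + #(reflect m A ∩ Iic 11) ≤ #A :=
    card_inter_Iic_add_card_reflect_inter_Iic_le (by omega) A
  obtain hbottom | htop : #(A ∩ Iic 11) ≤ 5 ∨ #(reflect m A ∩ Iic 11) ≤ 5 := by omega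
  · exact hlt.not_ge (h.twelve_le_card_of_card_inter_Iic_le hA hm hbottom)
  · have hreflect : 12 ≤ #(reflect m A) :=
      (h.reflect hA).twelve_le_card_of_card_inter_Iic_le
        (image_subset_iff.2 fun x _ ↦ mem_Iic.2 (Nat.sub_le m x)) hm htop
    exact hlt.not_ge (hreflect.trans card_image_le)

end IsTwoBasis

theorem image_range_succ_subset_Iic {k : ℕ} {a : ℕ → ℕ} (ha : ∀ m < k, a m ≤ a (m + 1)) :
    (range (k + 1)).image a ⊆ Iic (a k) := by
  have hmono : MonotoneOn a (Set.Iic k) :=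
    monotoneOn_of_le_add_one Set.ordConnected_Iic fun m _ _ hm ↦ ha m hm
  refine image_subset_iff.2 fun i hi ↦ mem_Iic.2 ?_
  have hik : i ≤ k := mem_range_succ_iff.1 hi
  exact hmono hik Set.self_mem_Iic hik

theorem n2star_10_eq_44_general :
    IsGreatest {n | ∃ a : ℕ → ℕ, a 0 = 0 ∧ (∀ m < 10, a m < a (m + 1)) ∧ n = 2 * a 10 ∧
      Icc 0 n ⊆ (range 11).image a + (range 11).image a} 44 := by
  constructor
  · refine ⟨fun i ↦ [0, 1, 2, 3, 7, 11, 15, 19, 20, 21, 22].getD i 0, ?_⟩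
    decide +kernel
  · rintro _ ⟨a, -, ha, rfl, hcover⟩
    by_contra! hlt
    have htwelve : 12 ≤ #((range 11).image a) :=
      (isTwoBasis_iff_Icc_subset.2 hcover).twelve_le_card
        (image_range_succ_subset_Iic fun m hm ↦ (ha m hm).le) (by omega)
    have heleven : #((range 11).image a) ≤ 11 := card_image_le.trans_eq (card_range 11)
    omega

theorem n2star_10_eq_44 :
    (∃ a : ℕ → ℕ, a 0 = 0 ∧ (∀ m < 10, a m < a (m + 1)) ∧ a 10 = 22 ∧
      Finset.Icc 0 44 ⊆
        ((Finset.range 11).image a) + ((Finset.range 11).image a)) ∧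
    (¬ ∃ a : ℕ → ℕ, a 0 = 0 ∧ (∀ m < 10, a m < a (m + 1)) ∧ a 10 = 23 ∧
      Finset.Icc 0 46 ⊆
        ((Finset.range 11).image a) + ((Finset.range 11).image a)) := by
  obtain ⟨⟨a, ha0, ha, ha10, hcover⟩, hmax⟩ := n2star_10_eq_44_general
  refine ⟨⟨a, ha0, ha, by omega, hcover⟩, ?_⟩
  rintro ⟨b, hb0, hb, hb10, hcover'⟩
  exact absurd (hmax ⟨b, hb0, hb, by rw [hb10], hcover'⟩) (by norm_num)
end
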